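/- (Energy upper bound for H-monotone solutions) Let n, m ≥ 1 and let u = (u_1,…,u_m) be a bounded H-monotone solution of system (S) on ℝⁿ such that each |∇u_i| is bounded and M := max_i sup_x Φ'(|∇u_i(x)|²)|∇u_i(x)| < ∞. Suppose there are constants a = (a_1,…,a_m) such that for each i, lim_{x_n→∞} u_i(x', x_n) = a_i for every x' ∈ ℝ^{n−1}, and assume the shifted functions u_i^t(x) := u_i(x', x_n + t) converge to the constant a_i in C¹ on compact subsets of ℝⁿ as t → ∞. Then there exists a constant C, independent of R, such that for all R ≥ 1: ∫_{B_R} [ ∑_{i=1}^m Φ(|∇u_i|²) − 2H̃(u) + 2H̃(a) ] dx ≤ C R^{n−1}. -/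

import Mathlib

open MeasureTheory Metric Finset Filter
open scoped RealInnerProductSpace

noncomputable section

/-- Divergence of a vector field on Euclidean space. -/
def vdiv {N : ℕ} (F : EuclideanSpace ℝ (Fin N) → EuclideanSpace ℝ (Fin N))
    (x : EuclideanSpace ℝ (Fin N)) : ℝ :=
  ∑ i, fderiv ℝ F x (EuclideanSpace.single i 1) i

/-- The unit vector in the last coordinate direction of `ℝ^{n+1}`. -/
def elast (n : ℕ) : EuclideanSpace ℝ (Fin (n + 1)) :=
  EuclideanSpace.single (Fin.last n) 1


lemma aux_integrable {N : ℕ} (k h : EuclideanSpace ℝ (Fin N) → ℝ) (B r : ℝ)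
    (hk : Measurable k) (hkB : ∀ x, |k x| ≤ B) (hk0 : ∀ x, r < ‖x‖ → k x = 0)
    (hh : Continuous h) : Integrable (fun x => k x * h x) := by
  have h1 : IntegrableOn h (closedBall 0 r) :=
    hh.continuousOn.integrableOn_compact (isCompact_closedBall _ _)
  have h2 := h1.integrable_indicator measurableSet_closedBall
  have h3 : (fun x => k x * h x) = fun x => k x * (closedBall 0 r).indicator h x := by
    funext x
    by_cases hx : x ∈ closedBall (0 : EuclideanSpace ℝ (Fin N)) r
    · rw [Set.indicator_of_mem hx]
    · rw [hk0 x (by simpa using hx)]; simp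
  rw [h3]
  exact h2.bdd_mul hk.aestronglyMeasurable (c := B) (Eventually.of_forall fun x => by simpa using hkB x)

lemma aux_param {N : ℕ} (k g : EuclideanSpace ℝ (Fin N) → ℝ) (B r : ℝ)
    (hk : Measurable k) (hkB : ∀ x, |k x| ≤ B) (hk0 : ∀ x, r < ‖x‖ → k x = 0)
    (hg : ContDiff ℝ 1 g) (e : EuclideanSpace ℝ (Fin N)) (t : ℝ) :
    HasDerivAt (fun t : ℝ => ∫ x, k x * g (x + t • e))
      (∫ x, k x * fderiv ℝ g (x + t • e) e) t := by
  have hc : Continuous fun x => fderiv ℝ g x e :=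
    (hg.continuous_fderiv (by norm_num)).clm_apply continuous_const
  have hcomp : IsCompact (closedBall (0 : EuclideanSpace ℝ (Fin N)) r ×ˢ closedBall t 1) :=
    (isCompact_closedBall _ _).prod (isCompact_closedBall _ _)
  obtain ⟨D, hD⟩ := hcomp.exists_bound_of_continuousOn
    (f := fun p : EuclideanSpace ℝ (Fin N) × ℝ => fderiv ℝ g (p.1 + p.2 • e) e)
    (Continuous.continuousOn (by exact hc.comp (by fun_prop)))
  have hgc := hg.continuous
  refine (hasDerivAt_integral_of_dominated_loc_of_deriv_le (s := ball t 1)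
    (F := fun t x => k x * g (x + t • e))
    (F' := fun t x => k x * fderiv ℝ g (x + t • e) e)
    (bound := fun x => |k x| * D)
    (ball_mem_nhds t one_pos) ?_ ?_ ?_ ?_ ?_ ?_).2
  · exact Eventually.of_forall fun s =>
      (aux_integrable k _ B r hk hkB hk0 (by fun_prop)).aestronglyMeasurable
  · exact aux_integrable k _ B r hk hkB hk0 (by fun_prop)
  · exact (aux_integrable k _ B r hk hkB hk0 (hc.comp (by fun_prop))).aestronglyMeasurable
  · refine Eventually.of_forall fun x s hs => ?_
    rw [norm_mul, Real.norm_eq_abs]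
    by_cases hx : r < ‖x‖
    · simp [hk0 x hx]
    · refine mul_le_mul_of_nonneg_left ?_ (abs_nonneg _)
      exact hD (x, s) ⟨by simpa using hx, ball_subset_closedBall hs⟩
  · refine aux_integrable (fun x => |k x|) _ B r (by fun_prop) (by simpa using hkB)
      (fun x hx => by simp [hk0 x hx]) continuous_const
  · refine Eventually.of_forall fun x s hs => ?_
    refine HasDerivAt.const_mul _ ?_
    have h1 : HasFDerivAt g (fderiv ℝ g (x + s • e)) (x + s • e) :=
      (hg.differentiable (by norm_num) _).hasFDerivAt
    have h2 : HasDerivAt (fun s : ℝ => x + s • e) e s := by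
      simpa using ((hasDerivAt_id s).smul_const e).const_add x
    exact h1.comp_hasDerivAt s h2

lemma aux_ibp {N : ℕ} (η : EuclideanSpace ℝ (Fin N) → ℝ)
    (W : EuclideanSpace ℝ (Fin N) → EuclideanSpace ℝ (Fin N))
    (hη : ContDiff ℝ 1 η) (hs : HasCompactSupport η) (hW : ContDiff ℝ 1 W) :
    ∫ x, η x * vdiv W x = - ∫ x, fderiv ℝ η x (W x) := by
  have hcη : ∀ v, Continuous fun x => fderiv ℝ η x v := fun v =>
    (hη.continuous_fderiv (by norm_num)).clm_apply continuous_const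
  have hcW : ∀ v, Continuous fun x => fderiv ℝ W x v := fun v =>
    (hW.continuous_fderiv (by norm_num)).clm_apply continuous_const
  have hWj : ∀ j, ContDiff ℝ 1 (fun x => W x j) := fun j => by fun_prop
  have hWd : ∀ j x v, fderiv ℝ (fun x => W x j) x v = fderiv ℝ W x v j := by
    intro j x v
    have := (EuclideanSpace.proj (𝕜 := ℝ) j).hasFDerivAt.comp x
      (hW.differentiable (by norm_num) x).hasFDerivAt
    have h2 : HasFDerivAt (fun x => W x j)
      ((EuclideanSpace.proj (𝕜 := ℝ) j).comp (fderiv ℝ W x)) x := this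
    rw [h2.fderiv]; rfl
  have hcWj : ∀ j v, Continuous fun x => fderiv ℝ (fun x => W x j) x v := fun j v =>
    ((hWj j).continuous_fderiv (by norm_num)).clm_apply continuous_const
  have hsd : ∀ v, HasCompactSupport fun x => fderiv ℝ η x v := fun v => hs.fderiv_apply ℝ v
  have hηc := hη.continuous
  have i1 : ∀ j v, Integrable (fun x => η x * fderiv ℝ (fun x => W x j) x v) := fun j v =>
    (hηc.mul (hcWj j v)).integrable_of_hasCompactSupport hs.mul_right
  have i2 : ∀ j v, Integrable (fun x => fderiv ℝ η x v * W x j) := fun j v =>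
    ((hcη v).mul (hWj j).continuous).integrable_of_hasCompactSupport (hsd v).mul_right
  have key : ∀ j, ∫ x, η x * fderiv ℝ (fun x => W x j) x (EuclideanSpace.single j 1)
      = - ∫ x, fderiv ℝ η x (EuclideanSpace.single j 1) * W x j := fun j =>
    integral_mul_fderiv_eq_neg_fderiv_mul_of_integrable (i2 j _) (i1 j _)
      ((hηc.mul (hWj j).continuous).integrable_of_hasCompactSupport hs.mul_right)
      (fun x _ => hη.differentiable (by norm_num) x)
      (fun x _ => (hWj j).differentiable (by norm_num) x)
  have e1 : (fun x => η x * vdiv W x) = fun x => ∑ j, η x *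
      fderiv ℝ (fun x => W x j) x (EuclideanSpace.single j 1) := by
    funext x
    simp only [vdiv, Finset.mul_sum, hWd]
  have e2 : (fun x => fderiv ℝ η x (W x)) = fun x => ∑ j,
      fderiv ℝ η x (EuclideanSpace.single j 1) * W x j := by
    funext x
    have : W x = ∑ j, W x j • EuclideanSpace.single j (1:ℝ) := by
      ext i; simp [Finset.sum_apply, Pi.single_apply]
    conv_lhs => rw [this]
    rw [map_sum]
    refine Finset.sum_congr rfl fun j _ => ?_
    rw [map_smul, smul_eq_mul, mul_comm]
  rw [e1, e2, integral_finsetSum _ (fun j _ => i1 j _), integral_finsetSum _ (fun j _ => i2 j _),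
    ← Finset.sum_neg_distrib]
  exact Finset.sum_congr rfl fun j _ => key j

lemma aux_grad_contDiff {N : ℕ} (u : EuclideanSpace ℝ (Fin N) → ℝ) (hu : ContDiff ℝ 2 u) :
    ContDiff ℝ 1 (gradient u) := by
  have h1 : ContDiff ℝ 1 (fderiv ℝ u) := hu.fderiv_right (by norm_num)
  exact (InnerProductSpace.toDual ℝ (EuclideanSpace ℝ (Fin N))).symm.toContinuousLinearEquiv.contDiff.comp h1

lemma aux_vdiv_smul {N : ℕ} (φ : EuclideanSpace ℝ (Fin N) → ℝ)
    (V : EuclideanSpace ℝ (Fin N) → EuclideanSpace ℝ (Fin N)) (x : EuclideanSpace ℝ (Fin N))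
    (hφ : DifferentiableAt ℝ φ x) (hV : DifferentiableAt ℝ V x) :
    vdiv (fun y => φ y • V y) x = φ x * vdiv V x + fderiv ℝ φ x (V x) := by
  have e2 : fderiv ℝ φ x (V x) = ∑ j,
      fderiv ℝ φ x (EuclideanSpace.single j 1) * V x j := by
    have : V x = ∑ j, V x j • EuclideanSpace.single j (1:ℝ) := by
      ext i; simp [Finset.sum_apply, Pi.single_apply]
    conv_lhs => rw [this]
    rw [map_sum]
    refine Finset.sum_congr rfl fun j _ => ?_
    rw [map_smul, smul_eq_mul, mul_comm]
  rw [e2, vdiv, vdiv, Finset.mul_sum, ← Finset.sum_add_distrib]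
  refine Finset.sum_congr rfl fun j _ => ?_
  rw [fderiv_fun_smul hφ hV]
  simp

/-- pointwise identity for one component -/
lemma aux_pointwise {N : ℕ} (Φ : ℝ → ℝ) (hΦ : ContDiff ℝ 2 Φ)
    (u : EuclideanSpace ℝ (Fin N) → ℝ) (hu : ContDiff ℝ 2 u) (e x : EuclideanSpace ℝ (Fin N)) :
    fderiv ℝ (fun y => Φ (‖gradient u y‖ ^ 2)) x e
      = 2 * (vdiv (fun y => fderiv ℝ u y e • (deriv Φ (‖gradient u y‖ ^ 2) • gradient u y)) x
        - fderiv ℝ u x e * vdiv (fun y => deriv Φ (‖gradient u y‖ ^ 2) • gradient u y) x) := by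
  have hg := aux_grad_contDiff u hu
  have hgd : DifferentiableAt ℝ (gradient u) x := hg.differentiable (by norm_num) x
  have h1 : ContDiff ℝ 1 (fderiv ℝ u) := hu.fderiv_right (by norm_num)
  have h1d : DifferentiableAt ℝ (fderiv ℝ u) x := h1.differentiable (by norm_num) x
  have hΦ' : ContDiff ℝ 1 (deriv Φ) := by
    have : ContDiff ℝ (1 + 1) Φ := by simpa [one_add_one_eq_two] using hΦ
    exact (contDiff_succ_iff_deriv.1 this).2.2
  have hn : ContDiff ℝ 1 (fun y => ‖gradient u y‖ ^ 2) := hg.norm_sq ℝ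
  have hV : ContDiff ℝ 1 (fun y => deriv Φ (‖gradient u y‖ ^ 2) • gradient u y) :=
    (hΦ'.comp hn).smul hg
  have hφ : DifferentiableAt ℝ (fun y => fderiv ℝ u y e) x := h1d.clm_apply (by fun_prop)
  rw [aux_vdiv_smul _ _ _ hφ (hV.differentiable (by norm_num) x)]
  have hL : HasFDerivAt (fun y => Φ (‖gradient u y‖ ^ 2))
      (deriv Φ (‖gradient u x‖ ^ 2) • (2 • (innerSL ℝ (gradient u x)).comp (fderiv ℝ (gradient u) x))) x :=
    ((hΦ.differentiable (by norm_num) _).hasDerivAt).comp_hasFDerivAt x (hgd.hasFDerivAt.norm_sq)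
  have hsym : fderiv ℝ (fderiv ℝ u) x (gradient u x) e = fderiv ℝ (fderiv ℝ u) x e (gradient u x) :=
    (hu.contDiffAt.isSymmSndFDerivAt (by simp)) _ _
  have hd1 : fderiv ℝ (fun y => fderiv ℝ u y e) x (gradient u x)
      = fderiv ℝ (fderiv ℝ u) x (gradient u x) e := by
    rw [fderiv_clm_apply h1d (by fun_prop)]; simp
  have hd2 : fderiv ℝ (fderiv ℝ u) x e (gradient u x)
      = ⟪gradient u x, fderiv ℝ (gradient u) x e⟫ := by
    have ha : (fun y => fderiv ℝ u y (gradient u x)) = fun y => ⟪gradient u x, gradient u y⟫ := by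
      funext y; rw [real_inner_comm, inner_gradient_left]
    have hb : fderiv ℝ (fun y => fderiv ℝ u y (gradient u x)) x e
        = fderiv ℝ (fderiv ℝ u) x e (gradient u x) := by
      rw [fderiv_clm_apply h1d (by fun_prop)]; simp
    rw [← hb, ha, fderiv_inner_apply ℝ (by fun_prop) hgd]
    simp
  rw [hL.fderiv, map_smul, hd1, hsym, hd2]
  simp
  ring

lemma aux_cutoff : ∃ K : ℝ, 0 ≤ K ∧ ∀ (N : ℕ) (R : ℝ), 1 ≤ R →
    ∃ η : EuclideanSpace ℝ (Fin N) → ℝ, ContDiff ℝ 1 η ∧ (∀ x, 0 ≤ η x) ∧ (∀ x, η x ≤ 1) ∧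
      (∀ x, ‖x‖ ≤ R → η x = 1) ∧ (∀ x, R + 1 ≤ ‖x‖ → η x = 0) ∧
      ∀ x v, |fderiv ℝ η x v| ≤
        K * ((ball 0 (R + 1) \ ball 0 R).indicator (fun _ => (1 : ℝ)) x) * ‖v‖ := by
  have hsm : ContDiff ℝ 1 Real.smoothTransition := Real.smoothTransition.contDiff (n := 1)
  have hsd : Continuous (deriv Real.smoothTransition) := hsm.continuous_deriv (by norm_num)
  obtain ⟨D, hD⟩ := (isCompact_Icc (a := (0:ℝ)) (b := 1)).exists_bound_of_continuousOn
    hsd.continuousOn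
  have hD0 : 0 ≤ D := (norm_nonneg _).trans (hD 0 (by simp))
  have hz0 : ∀ y : ℝ, y ≤ 0 → deriv Real.smoothTransition y = 0 := by
    intro y hy
    have : IsLocalMin Real.smoothTransition y := by
      refine Eventually.of_forall fun z => ?_
      rw [Real.smoothTransition.zero_of_nonpos hy]; exact Real.smoothTransition.nonneg z
    exact this.deriv_eq_zero
  have hz1 : ∀ y : ℝ, 1 ≤ y → deriv Real.smoothTransition y = 0 := by
    intro y hy
    have : IsLocalMax Real.smoothTransition y := by
      refine Eventually.of_forall fun z => ?_
      rw [Real.smoothTransition.one_of_one_le hy]; exact Real.smoothTransition.le_one z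
    exact this.deriv_eq_zero
  refine ⟨D * 2, by positivity, fun N R hR => ?_⟩
  have hq : (0:ℝ) < 2 * R + 1 := by linarith
  have hle : ∀ x : EuclideanSpace ℝ (Fin N), ‖x‖ ≤ R →
      1 ≤ (2 * R + 1)⁻¹ * ((R + 1) ^ 2 - ‖x‖ ^ 2) := by
    intro x hx
    rw [inv_mul_eq_div, le_div_iff₀ hq]
    nlinarith [norm_nonneg x]
  have hge : ∀ x : EuclideanSpace ℝ (Fin N), R + 1 ≤ ‖x‖ →
      (2 * R + 1)⁻¹ * ((R + 1) ^ 2 - ‖x‖ ^ 2) ≤ 0 := by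
    intro x hx
    refine mul_nonpos_of_nonneg_of_nonpos (by positivity) ?_
    nlinarith [norm_nonneg x]
  have hin : ContDiff ℝ 1 (fun x : EuclideanSpace ℝ (Fin N) =>
      (2 * R + 1)⁻¹ * ((R + 1) ^ 2 - ‖x‖ ^ 2)) :=
    contDiff_const.mul (contDiff_const.sub (contDiff_norm_sq ℝ))
  refine ⟨fun x => Real.smoothTransition ((2 * R + 1)⁻¹ * ((R + 1) ^ 2 - ‖x‖ ^ 2)),
    hsm.comp hin, fun x => Real.smoothTransition.nonneg _, fun x => Real.smoothTransition.le_one _,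
    fun x hx => Real.smoothTransition.one_of_one_le (hle x hx),
    fun x hx => Real.smoothTransition.zero_of_nonpos (hge x hx), fun x v => ?_⟩
  have hd : HasFDerivAt (fun x : EuclideanSpace ℝ (Fin N) =>
      Real.smoothTransition ((2 * R + 1)⁻¹ * ((R + 1) ^ 2 - ‖x‖ ^ 2)))
      (deriv Real.smoothTransition ((2 * R + 1)⁻¹ * ((R + 1) ^ 2 - ‖x‖ ^ 2)) •
        ((2 * R + 1)⁻¹ • (-((2 : ℕ) • innerSL ℝ x : EuclideanSpace ℝ (Fin N) →L[ℝ] ℝ)))) x := by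
    refine ((hsm.differentiable (by norm_num) _).hasDerivAt).comp_hasFDerivAt x ?_
    exact ((hasStrictFDerivAt_norm_sq x).hasFDerivAt.const_sub _).const_mul _
  rw [hd.fderiv]
  by_cases h1 : ‖x‖ < R
  · rw [hz1 _ (hle x h1.le)]
    simp [h1]
  by_cases h2 : R + 1 ≤ ‖x‖
  · rw [hz0 _ (hge x h2)]
    simp [h2]
  rw [Set.indicator_of_mem (by simp; exact ⟨by linarith, by linarith⟩)]
  have hb : |deriv Real.smoothTransition ((2 * R + 1)⁻¹ * ((R + 1) ^ 2 - ‖x‖ ^ 2))| ≤ D := by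
    by_cases h3 : (2 * R + 1)⁻¹ * ((R + 1) ^ 2 - ‖x‖ ^ 2) ≤ 0
    · rw [hz0 _ h3]; simpa
    by_cases h4 : 1 ≤ (2 * R + 1)⁻¹ * ((R + 1) ^ 2 - ‖x‖ ^ 2)
    · rw [hz1 _ h4]; simpa
    exact hD _ ⟨by linarith, by linarith⟩
  have hc : |(2 * R + 1)⁻¹ * (-(2 * ⟪x, v⟫))| ≤ 2 * ‖v‖ := by
    rw [abs_mul, abs_inv, abs_of_pos hq, abs_neg, abs_mul, inv_mul_eq_div, div_le_iff₀ hq]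
    have := abs_real_inner_le_norm x v
    have hx : ‖x‖ ≤ 2 * R + 1 := by linarith
    have h5 : ‖x‖ * ‖v‖ ≤ (2 * R + 1) * ‖v‖ := mul_le_mul_of_nonneg_right hx (norm_nonneg v)
    rw [abs_of_pos (by norm_num : (0:ℝ) < 2)]
    linarith
  have : (deriv Real.smoothTransition ((2 * R + 1)⁻¹ * ((R + 1) ^ 2 - ‖x‖ ^ 2)) •
        ((2 * R + 1)⁻¹ • (-((2 : ℕ) • innerSL ℝ x : EuclideanSpace ℝ (Fin N) →L[ℝ] ℝ)))) v =
      deriv Real.smoothTransition ((2 * R + 1)⁻¹ * ((R + 1) ^ 2 - ‖x‖ ^ 2)) *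
        ((2 * R + 1)⁻¹ * (-(2 * ⟪x, v⟫))) := by simp
  rw [this, abs_mul]
  calc _ ≤ D * (2 * ‖v‖) := mul_le_mul hb hc (abs_nonneg _) hD0
    _ = _ := by ring

lemma aux_vol (n : ℕ) : ∃ c : ℝ, 0 ≤ c ∧ ∀ R : ℝ, 1 ≤ R →
    volume.real (ball (0 : EuclideanSpace ℝ (Fin (n + 1))) (R + 1) \ ball 0 R) ≤ c * R ^ n := by
  refine ⟨(n + 1) * 2 ^ n * volume.real (ball (0 : EuclideanSpace ℝ (Fin (n + 1))) 1),
    by positivity, fun R hR => ?_⟩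
  have hb : ∀ r : ℝ, 0 ≤ r → volume.real (ball (0 : EuclideanSpace ℝ (Fin (n + 1))) r)
      = r ^ (n + 1) * volume.real (ball (0 : EuclideanSpace ℝ (Fin (n + 1))) 1) := by
    intro r hr
    rw [measureReal_def, Measure.addHaar_ball _ _ hr, ENNReal.toReal_mul,
      ENNReal.toReal_ofReal (by positivity), finrank_euclideanSpace_fin, ← measureReal_def]
  rw [measureReal_sdiff (ball_subset_ball (by linarith)) measurableSet_ball
    measure_ball_lt_top.ne, hb (R + 1) (by linarith), hb R (by linarith), ← sub_mul]
  have h0 : 0 ≤ volume.real (ball (0 : EuclideanSpace ℝ (Fin (n + 1))) 1) := measureReal_nonneg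
  have hp : (R + 1) ^ (n + 1) - R ^ (n + 1) ≤ (n + 1) * 2 ^ n * R ^ n := by
    have hgeom := (Commute.all (R + 1) R).geom_sum₂_mul (n + 1)
    have h1 : (R + 1) - R = 1 := by ring
    rw [h1, mul_one] at hgeom
    rw [← hgeom]
    have : ∀ i ∈ Finset.range (n + 1), (R + 1) ^ i * R ^ (n + 1 - 1 - i) ≤ (2 * R) ^ n := by
      intro i hi
      have hi' : i ≤ n := by simpa [Nat.lt_succ_iff] using hi
      calc (R + 1) ^ i * R ^ (n + 1 - 1 - i) ≤ (2 * R) ^ i * (2 * R) ^ (n - i) := by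
            have : n + 1 - 1 - i = n - i := by omega
            rw [this]
            gcongr <;> linarith
        _ = (2 * R) ^ n := by rw [← pow_add]; congr 1; omega
    calc _ ≤ ∑ i ∈ Finset.range (n + 1), (2 * R) ^ n := Finset.sum_le_sum this
      _ = _ := by simp; ring
  calc _ ≤ ((n + 1) * 2 ^ n * R ^ n) * volume.real (ball (0 : EuclideanSpace ℝ (Fin (n + 1))) 1) :=
        mul_le_mul_of_nonneg_right hp h0
    _ = _ := by ring

lemma aux_sign {N : ℕ} (f : EuclideanSpace ℝ (Fin N) → ℝ) (hf : Continuous f)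
    (h0 : ∀ x, f x ≠ 0) : ∃ σ : ℝ, |σ| = 1 ∧ ∀ x, σ * f x = |f x| := by
  by_cases h : ∃ x, 0 < f x
  · obtain ⟨x, hx⟩ := h
    refine ⟨1, by simp, fun y => ?_⟩
    rw [one_mul, abs_of_pos]
    by_contra hy
    obtain ⟨z, hz⟩ := mem_range_of_exists_le_of_exists_ge hf ⟨y, not_lt.1 hy⟩ ⟨x, hx.le⟩
    exact h0 z hz
  · push Not at h
    exact ⟨-1, by simp, fun y => by rw [abs_of_nonpos (h y)]; ring⟩

lemma aux_vdiv_translate {N : ℕ} (W : EuclideanSpace ℝ (Fin N) → EuclideanSpace ℝ (Fin N))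
    (x b : EuclideanSpace ℝ (Fin N)) : vdiv W (x + b) = vdiv (fun y => W (y + b)) x := by
  unfold vdiv
  rw [fderiv_comp_add_right]

/-- **Energy upper bound for H-monotone solutions**: a bounded `H`-monotone solution of
the quasilinear system `-div(Φ'(|∇uᵢ|²)∇uᵢ) = Hᵢ(u)` on `ℝ^{n+1}` whose components
converge (in `C¹` on compact sets) to constants `aᵢ` as `x_{n+1} → ∞` satisfies
`∫_{B_R} (∑ᵢ Φ(|∇uᵢ|²) - 2H̃(u) + 2H̃(a)) ≤ C Rⁿ` for all `R ≥ 1`. -/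
theorem energy_upper_bound_H_monotone
    (n m : ℕ) (hm : 1 ≤ m)
    (Φ : ℝ → ℝ) (hΦ : ContDiff ℝ 2 Φ) (hΦ0 : Φ 0 = 0)
    (hΦpos : ∀ s : ℝ, 0 < s → 0 < Φ s)
    (hΦ'pos : ∀ s : ℝ, 0 < s → 0 < deriv Φ s)
    (hΦell : ∀ s : ℝ, 0 < s → 0 < deriv Φ s + 2 * s * deriv (deriv Φ) s)
    (H : Fin m → (Fin m → ℝ) → ℝ) (hH : ∀ i, ContDiff ℝ 1 (H i))
    (Ht : (Fin m → ℝ) → ℝ) (hHt : ContDiff ℝ 2 Ht)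
    (hHtgrad : ∀ i y, fderiv ℝ Ht y (Pi.single i 1) = H i y)
    (u : Fin m → EuclideanSpace ℝ (Fin (n + 1)) → ℝ)
    (hu : ∀ i, ContDiff ℝ 2 (u i))
    (hsol : ∀ i x, -vdiv (fun y => deriv Φ (‖gradient (u i) y‖ ^ 2) • gradient (u i) y) x
        = H i (fun j => u j x))
    -- `u` is bounded with bounded gradients
    (hubdd : ∃ C : ℝ, ∀ i x, |u i x| ≤ C)
    (hgradbdd : ∃ C : ℝ, ∀ i x, ‖gradient (u i) x‖ ≤ C)
    (M : ℝ) (hM : ∀ i x, deriv Φ (‖gradient (u i) x‖ ^ 2) * ‖gradient (u i) x‖ ≤ M)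
    -- `u` is H-monotone
    (hmono : ∀ i x, fderiv ℝ (u i) x (elast n) ≠ 0)
    (horient : ∀ i j : Fin m, i ≤ j → ∀ x,
      0 < fderiv ℝ (H i) (fun k => u k x) (Pi.single j 1)
        * fderiv ℝ (u i) x (elast n) * fderiv ℝ (u j) x (elast n))
    -- limits in the `x_{n+1}` direction
    (a : Fin m → ℝ)
    (hlim : ∀ i x, Tendsto (fun t : ℝ => u i (x + t • elast n)) atTop (nhds (a i)))
    -- the shifted functions converge in `C¹` on compact sets
    (hC1conv : ∀ i, ∀ K : Set (EuclideanSpace ℝ (Fin (n + 1))), IsCompact K →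
      TendstoUniformlyOn (fun (t : ℝ) x => u i (x + t • elast n)) (fun _ => a i) atTop K ∧
      TendstoUniformlyOn (fun (t : ℝ) x => gradient (u i) (x + t • elast n))
        (fun _ => 0) atTop K) :
    ∃ C : ℝ, ∀ R : ℝ, 1 ≤ R →
      (∫ x in ball (0 : EuclideanSpace ℝ (Fin (n + 1))) R,
          ((∑ i, Φ (‖gradient (u i) x‖ ^ 2))
            - 2 * Ht (fun j => u j x) + 2 * Ht a))
        ≤ C * R ^ n := by
  obtain ⟨Cu, hCu⟩ := hubdd
  obtain ⟨Cg, hCg⟩ := hgradbdd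
  obtain ⟨K, hK0, hK⟩ := aux_cutoff
  obtain ⟨c, hc0, hc⟩ := aux_vol n
  have hg : ∀ i, ContDiff ℝ 1 (gradient (u i)) := fun i => aux_grad_contDiff _ (hu i)
  have hu1 : ∀ i, ContDiff ℝ 1 (u i) := fun i => (hu i).of_le (by norm_num)
  have hn : ∀ i, ContDiff ℝ 1 (fun y => ‖gradient (u i) y‖ ^ 2) := fun i => (hg i).norm_sq ℝ
  have hΦ' : ContDiff ℝ 1 (deriv Φ) := by
    have : ContDiff ℝ (1 + 1) Φ := by simpa [one_add_one_eq_two] using hΦ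
    exact (contDiff_succ_iff_deriv.1 this).2.2
  have hΦ1 : ContDiff ℝ 1 Φ := hΦ.of_le (by norm_num)
  have hHt1 : ContDiff ℝ 1 Ht := hHt.of_le (by norm_num)
  have hV : ∀ i, ContDiff ℝ 1 (fun y => deriv Φ (‖gradient (u i) y‖ ^ 2) • gradient (u i) y) :=
    fun i => (hΦ'.comp (hn i)).smul (hg i)
  have hdu : ∀ i, ContDiff ℝ 1 (fun y => fderiv ℝ (u i) y (elast n)) := fun i =>
    ((hu i).fderiv_right (by norm_num)).clm_apply contDiff_const
  have hW : ∀ i, ContDiff ℝ 1 (fun y => fderiv ℝ (u i) y (elast n) •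
      (deriv Φ (‖gradient (u i) y‖ ^ 2) • gradient (u i) y)) := fun i => (hdu i).smul (hV i)
  have huv : ContDiff ℝ 1 (fun x => fun j => u j x) := contDiff_pi.2 hu1
  have hVM : ∀ i x, ‖deriv Φ (‖gradient (u i) x‖ ^ 2) • gradient (u i) x‖ ≤ M := by
    intro i x
    rw [norm_smul, Real.norm_eq_abs]
    by_cases h : gradient (u i) x = 0
    · have := hM i x
      simp only [h, norm_zero, mul_zero] at this ⊢
      exact this
    · rw [abs_of_pos (hΦ'pos _ (by positivity))]
      exact hM i x
  have hM0 : 0 ≤ M := (norm_nonneg _).trans (hVM ⟨0, hm⟩ 0)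
  have hCu0 : 0 ≤ Cu := (abs_nonneg _).trans (hCu ⟨0, hm⟩ 0)
  choose σ hσ1 hσ using fun i => aux_sign _ (hdu i).continuous (hmono i)
  -- the energy density
  set e : EuclideanSpace ℝ (Fin (n + 1)) → ℝ := fun x =>
    (∑ i, Φ (‖gradient (u i) x‖ ^ 2)) - 2 * Ht (fun j => u j x) + 2 * Ht a with he
  have hΦg : ∀ i, ContDiff ℝ 1 (fun x => Φ (‖gradient (u i) x‖ ^ 2)) := fun i => hΦ1.comp (hn i)
  have heC : ContDiff ℝ 1 e :=
    ((ContDiff.sum fun i _ => hΦg i).sub (contDiff_const.mul (hHt1.comp huv))).add contDiff_const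
  have hde : ∀ x, fderiv ℝ e x (elast n) = ∑ i, 2 * vdiv (fun y => fderiv ℝ (u i) y (elast n) •
      (deriv Φ (‖gradient (u i) y‖ ^ 2) • gradient (u i) y)) x := by
    intro x
    have d1 : HasFDerivAt (fun x => ∑ i, Φ (‖gradient (u i) x‖ ^ 2))
        (∑ i, fderiv ℝ (fun x => Φ (‖gradient (u i) x‖ ^ 2)) x) x :=
      HasFDerivAt.fun_sum fun i _ => ((hΦg i).differentiable (by norm_num) x).hasFDerivAt
    have d2 : HasFDerivAt (fun x => fun j => u j x)
        (ContinuousLinearMap.pi fun j => fderiv ℝ (u j) x) x :=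
      hasFDerivAt_pi.2 fun j => ((hu1 j).differentiable (by norm_num) x).hasFDerivAt
    have d3 : HasFDerivAt (fun x => Ht (fun j => u j x))
        ((fderiv ℝ Ht (fun j => u j x)).comp
          (ContinuousLinearMap.pi fun j => fderiv ℝ (u j) x)) x :=
      (hHt1.differentiable (by norm_num) _).hasFDerivAt.comp x d2
    have d4 : HasFDerivAt e _ x := (d1.sub (d3.const_mul 2)).add_const (2 * Ht a)
    rw [d4.fderiv]
    have e3 : fderiv ℝ Ht (fun j => u j x) (fun j => fderiv ℝ (u j) x (elast n))
        = ∑ i, fderiv ℝ (u i) x (elast n) * H i (fun j => u j x) := by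
      conv_lhs => rw [← Finset.univ_sum_single (fun j => fderiv ℝ (u j) x (elast n)), map_sum]
      refine Finset.sum_congr rfl fun i _ => ?_
      rw [← hHtgrad i, ← smul_eq_mul, ← map_smul]
      congr 1
      rw [← Pi.single_smul]; simp
    have e4 : ((ContinuousLinearMap.pi fun j => fderiv ℝ (u j) x) (elast n))
        = (fun j => fderiv ℝ (u j) x (elast n)) := rfl
    simp only [sub_apply, _root_.smul_apply, ContinuousLinearMap.comp_apply,
      _root_.sum_apply, smul_eq_mul]
    rw [e4, e3, Finset.mul_sum, ← Finset.sum_sub_distrib]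
    refine Finset.sum_congr rfl fun i _ => ?_
    rw [aux_pointwise Φ hΦ (u i) (hu i), ← hsol i x]
    ring
  have heB : ∃ B, 0 ≤ B ∧ ∀ x, |e x| ≤ B := by
    obtain ⟨B1, hB1⟩ := (isCompact_Icc (a := (0:ℝ)) (b := Cg ^ 2)).exists_bound_of_continuousOn
      hΦ1.continuous.continuousOn
    obtain ⟨B2, hB2⟩ := (isCompact_closedBall (0 : Fin m → ℝ) Cu).exists_bound_of_continuousOn
      hHt1.continuous.continuousOn
    have h : ∀ x, |e x| ≤ (∑ i : Fin m, B1) + 2 * B2 + 2 * |Ht a| := by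
      intro x
      have h1 : |∑ i, Φ (‖gradient (u i) x‖ ^ 2)| ≤ ∑ i : Fin m, B1 := by
        refine (Finset.abs_sum_le_sum_abs _ _).trans (Finset.sum_le_sum fun i _ => ?_)
        exact hB1 _ ⟨by positivity, pow_le_pow_left₀ (norm_nonneg _) (hCg i x) 2⟩
      have h2 : |Ht (fun j => u j x)| ≤ B2 := by
        refine hB2 _ ?_
        rw [mem_closedBall_zero_iff, pi_norm_le_iff_of_nonneg hCu0]
        exact fun i => hCu i x
      rw [he]
      have h3 := abs_le.1 h1
      have h4 := abs_le.1 h2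
      have h5 := abs_le.1 (le_refl |Ht a|)
      rw [abs_le]
      constructor <;> dsimp only <;> linarith
    exact ⟨_, (abs_nonneg _).trans (h 0), h⟩
  obtain ⟨B, hB0, hB⟩ := heB
  have hlim0 : ∀ x, Tendsto (fun t : ℝ => e (x + t • elast n)) atTop (nhds 0) := by
    intro x
    have h1 : ∀ i, Tendsto (fun t : ℝ => Φ (‖gradient (u i) (x + t • elast n)‖ ^ 2)) atTop
        (nhds 0) := by
      intro i
      have := ((hC1conv i {x} isCompact_singleton).2.tendsto_at (Set.mem_singleton x))
      have h2 : Tendsto (fun t : ℝ => ‖gradient (u i) (x + t • elast n)‖ ^ 2) atTop (nhds 0) := by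
        simpa using (this.norm.pow 2)
      have h3 := (hΦ1.continuous.tendsto 0).comp h2
      rwa [hΦ0] at h3
    have h2 : Tendsto (fun t : ℝ => Ht (fun j => u j (x + t • elast n))) atTop (nhds (Ht a)) :=
      (hHt1.continuous.tendsto a).comp (tendsto_pi_nhds.2 fun j => hlim j x)
    have h3 := ((tendsto_finsetSum Finset.univ fun i _ => h1 i).sub (h2.const_mul 2)).add_const
      (2 * Ht a)
    simpa [he] using h3
  refine ⟨(4 * M * K * m * Cu + B) * c, fun R hR => ?_⟩
  obtain ⟨η, hη, hη0, hη1, hηR, hηR1, hηd⟩ := hK (n + 1) R hR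
  set A : Set (EuclideanSpace ℝ (Fin (n + 1))) := ball 0 (R + 1) \ ball 0 R with hA
  have hAm : MeasurableSet A := measurableSet_ball.diff measurableSet_ball
  have hAfin : volume A < ⊤ := (measure_mono Set.sdiff_subset).trans_lt measure_ball_lt_top
  set χ : EuclideanSpace ℝ (Fin (n + 1)) → ℝ := A.indicator (fun _ => 1) with hχ
  have hχm : Measurable χ := measurable_const.indicator hAm
  have hχ0 : ∀ x, 0 ≤ χ x := fun x => Set.indicator_nonneg (fun _ _ => zero_le_one) x
  have hχ1 : ∀ x, |χ x| ≤ 1 := fun x => by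
    rw [abs_of_nonneg (hχ0 x)]
    exact Set.indicator_le_self' (fun _ _ => zero_le_one) x
  have hχs : ∀ x, R + 1 < ‖x‖ → χ x = 0 := fun x hx => by
    refine Set.indicator_of_notMem (fun h => ?_) _
    have := h.1
    simp at this; linarith
  have hηm : Measurable η := hη.continuous.measurable
  have hηa : ∀ x, |η x| ≤ 1 := fun x => by rw [abs_of_nonneg (hη0 x)]; exact hη1 x
  have hηs : ∀ x, R + 1 < ‖x‖ → η x = 0 := fun x hx => hηR1 x hx.le
  have hηc : HasCompactSupport η := by
    refine HasCompactSupport.of_support_subset_isCompact (isCompact_closedBall 0 (R + 1)) ?_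
    intro x hx
    by_contra h
    exact hx (hηs x (by simpa using h))
  have hχint : ∀ h : EuclideanSpace ℝ (Fin (n + 1)) → ℝ, ∫ x, χ x * h x = ∫ x in A, h x := by
    intro h
    rw [← integral_indicator hAm]
    congr 1; funext x
    by_cases hx : x ∈ A <;> simp [hχ, hx]
  have hder : ∀ t : ℝ, HasDerivAt (fun t : ℝ => (∫ x, η x * e (x + t • elast n)) +
      ∑ i, 2 * M * K * σ i * ∫ x, χ x * u i (x + t • elast n))
      ((∫ x, η x * fderiv ℝ e (x + t • elast n) (elast n)) +
      ∑ i, 2 * M * K * σ i * ∫ x, χ x * fderiv ℝ (u i) (x + t • elast n) (elast n)) t := by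
    intro t
    refine (aux_param η e 1 (R + 1) hηm hηa hηs heC _ t).add (HasDerivAt.fun_sum fun i _ => ?_)
    exact (aux_param χ (u i) 1 (R + 1) hχm hχ1 hχs (hu1 i) _ t).const_mul _
  have hmonoF : Monotone (fun t : ℝ => (∫ x, η x * e (x + t • elast n)) +
      ∑ i, 2 * M * K * σ i * ∫ x, χ x * u i (x + t • elast n)) := by
    refine monotone_of_deriv_nonneg (fun t => (hder t).differentiableAt) fun t => ?_
    rw [(hder t).deriv]
    have htr : Continuous fun x : EuclideanSpace ℝ (Fin (n + 1)) => x + t • elast n := by fun_prop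
    have hWt : ∀ i, ContDiff ℝ 1 (fun x => (fun y => fderiv ℝ (u i) y (elast n) •
      (deriv Φ (‖gradient (u i) y‖ ^ 2) • gradient (u i) y)) (x + t • elast n)) := fun i =>
      (hW i).comp (contDiff_id.add contDiff_const)
    have hvt : ∀ i x, vdiv (fun y => fderiv ℝ (u i) y (elast n) •
        (deriv Φ (‖gradient (u i) y‖ ^ 2) • gradient (u i) y)) (x + t • elast n)
        = vdiv (fun x => (fun y => fderiv ℝ (u i) y (elast n) •
      (deriv Φ (‖gradient (u i) y‖ ^ 2) • gradient (u i) y)) (x + t • elast n)) x := by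
      intro i x
      exact aux_vdiv_translate _ _ _
    have hvc : ∀ i, Continuous (fun x => vdiv (fun y => fderiv ℝ (u i) y (elast n) •
        (deriv Φ (‖gradient (u i) y‖ ^ 2) • gradient (u i) y)) x) := by
      intro i
      unfold vdiv
      refine continuous_finsetSum _ fun j _ => ?_
      have := ((hW i).continuous_fderiv (by norm_num)).clm_apply
        (continuous_const (y := EuclideanSpace.single j (1:ℝ)))
      fun_prop
    have hI : ∫ x, η x * fderiv ℝ e (x + t • elast n) (elast n)
        = ∑ i, 2 * -∫ x, fderiv ℝ η x ((fun y => fderiv ℝ (u i) y (elast n) •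
      (deriv Φ (‖gradient (u i) y‖ ^ 2) • gradient (u i) y)) (x + t • elast n)) := by
      simp only [hde, Finset.mul_sum]
      rw [integral_finsetSum]
      · refine Finset.sum_congr rfl fun i _ => ?_
        rw [← aux_ibp η _ hη hηc (hWt i), ← integral_const_mul]
        congr 1; funext x
        rw [hvt]; ring
      · intro i _
        exact aux_integrable η _ 1 (R + 1) hηm hηa hηs
          (continuous_const.mul ((hvc i).comp htr))
    rw [hI, ← Finset.sum_add_distrib]
    refine Finset.sum_nonneg fun i _ => ?_
    have hcmp : ∫ x, fderiv ℝ η x ((fun y => fderiv ℝ (u i) y (elast n) •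
      (deriv Φ (‖gradient (u i) y‖ ^ 2) • gradient (u i) y)) (x + t • elast n))
        ≤ ∫ x, (M * K * σ i) * (χ x * fderiv ℝ (u i) (x + t • elast n) (elast n)) := by
      refine integral_mono ?_ ?_ fun x => ?_
      · have hcs : HasCompactSupport (fun x => fderiv ℝ η x ((fun y => fderiv ℝ (u i) y (elast n) •
            (deriv Φ (‖gradient (u i) y‖ ^ 2) • gradient (u i) y)) (x + t • elast n))) := by
          refine (hηc.fderiv ℝ).mono fun x hx hx' => hx ?_
          simp [hx']
        exact ((hη.continuous_fderiv (by norm_num)).clm_apply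
          (hWt i).continuous).integrable_of_hasCompactSupport hcs
      · exact (aux_integrable χ _ 1 (R + 1) hχm hχ1 hχs
          ((hdu i).continuous.comp htr)).const_mul _
      · refine (le_abs_self _).trans ((hηd x _).trans ?_)
        dsimp only
        rw [norm_smul, Real.norm_eq_abs]
        have h1 := hVM i (x + t • elast n)
        have h2 : M * K * σ i * (χ x * fderiv ℝ (u i) (x + t • elast n) (elast n))
            = K * χ x * (|fderiv ℝ (u i) (x + t • elast n) (elast n)| * M) := by
          rw [← hσ i]; ring
        rw [h2]
        have := hχ0 x
        gcongr
    rw [integral_const_mul] at hcmp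
    linarith
  have hgb : ∀ t : ℝ, |∑ i, 2 * M * K * σ i * ∫ x, χ x * u i (x + t • elast n)|
      ≤ 2 * M * K * m * Cu * volume.real A := by
    intro t
    refine (Finset.abs_sum_le_sum_abs _ _).trans ?_
    have : ∀ i ∈ (Finset.univ : Finset (Fin m)),
        |2 * M * K * σ i * ∫ x, χ x * u i (x + t • elast n)|
        ≤ 2 * M * K * (Cu * volume.real A) := by
      intro i _
      rw [hχint, abs_mul, abs_mul, hσ1, mul_one, abs_of_nonneg (by positivity)]
      refine mul_le_mul_of_nonneg_left ?_ (by positivity)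
      exact norm_setIntegral_le_of_norm_le_const (f := fun x => u i (x + t • elast n)) (C := Cu)
        hAfin fun x _ => hCu i (x + t • elast n)
    refine (Finset.sum_le_sum this).trans (le_of_eq ?_)
    simp; ring
  have hflim : Tendsto (fun t : ℝ => ∫ x, η x * e (x + t • elast n)) atTop (nhds 0) := by
    have : Tendsto (fun t : ℝ => ∫ x, η x * e (x + t • elast n)) atTop
        (nhds (∫ x : EuclideanSpace ℝ (Fin (n + 1)), (0 : ℝ))) := by
      refine tendsto_integral_filter_of_dominated_convergence (fun x => η x * B) ?_ ?_ ?_ ?_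
      · refine Eventually.of_forall fun t => ?_
        exact (hη.continuous.mul (heC.continuous.comp (by fun_prop))).aestronglyMeasurable
      · refine Eventually.of_forall fun t => Eventually.of_forall fun x => ?_
        rw [norm_mul, Real.norm_eq_abs, abs_of_nonneg (hη0 x)]
        exact mul_le_mul_of_nonneg_left (hB _) (hη0 x)
      · exact aux_integrable η _ 1 (R + 1) hηm hηa hηs continuous_const
      · refine Eventually.of_forall fun x => ?_
        simpa using (hlim0 x).const_mul (η x)
    simpa using this
  have hf0 : ∫ x, η x * e x ≤ 4 * M * K * m * Cu * volume.real A := by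
    have h1 : ∀ᶠ t : ℝ in atTop, ∫ x, η x * e x ≤
        (∫ x, η x * e (x + t • elast n)) + 4 * M * K * m * Cu * volume.real A := by
      filter_upwards [eventually_ge_atTop 0] with t ht
      have h2 := hmonoF ht
      have h3 := abs_le.1 (hgb 0)
      have h4 := abs_le.1 (hgb t)
      simp only [zero_smul, add_zero] at h2 h3
      linarith [h3.1, h4.2]
    have h5 := ge_of_tendsto (hflim.add_const (4 * M * K * m * Cu * volume.real A)) h1
    simpa using h5
  have hle : ∫ x in ball (0 : EuclideanSpace ℝ (Fin (n + 1))) R, e x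
      ≤ (∫ x, η x * e x) + B * volume.real A := by
    have hBv : B * volume.real A = ∫ x, χ x * B := by
      rw [hχint]; simp [mul_comm]
    have i1 := aux_integrable η e 1 (R + 1) hηm hηa hηs heC.continuous
    have i2 := aux_integrable χ (fun _ => B) 1 (R + 1) hχm hχ1 hχs continuous_const
    rw [hBv, ← integral_add i1 i2, ← integral_indicator measurableSet_ball]
    refine integral_mono ?_ (i1.add i2) fun x => ?_
    · rw [integrable_indicator_iff measurableSet_ball]
      exact (heC.continuous.continuousOn.integrableOn_compact
        (isCompact_closedBall 0 R)).mono_set ball_subset_closedBall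
    · by_cases hx : x ∈ ball (0 : EuclideanSpace ℝ (Fin (n + 1))) R
      · have hxA : x ∉ A := fun h => h.2 hx
        simp only [Set.indicator_of_mem hx, hηR x (by simpa using (mem_ball_zero_iff.1 hx).le), hχ,
          Set.indicator_of_notMem hxA]
        simp
      · rw [Set.indicator_of_notMem hx]
        by_cases hxA : x ∈ A
        · have h1 := abs_le.1 (hB x)
          have : |η x * e x| ≤ B := by
            rw [abs_mul]
            calc _ ≤ 1 * B := mul_le_mul (hηa x) (hB x) (abs_nonneg _) zero_le_one
              _ = B := one_mul _
          simp only [hχ, Set.indicator_of_mem hxA]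
          linarith [(abs_le.1 this).1]
        · have : R + 1 ≤ ‖x‖ := by
            by_contra h
            exact hxA ⟨by simpa using h, hx⟩
          simp [hηR1 x this, hχ, Set.indicator_of_notMem hxA]
  have hv := hc R hR
  calc _ ≤ 4 * M * K * m * Cu * volume.real A + B * volume.real A := by linarith
    _ = (4 * M * K * m * Cu + B) * volume.real A := by ring
    _ ≤ (4 * M * K * m * Cu + B) * (c * R ^ n) :=
        mul_le_mul_of_nonneg_left hv (by positivity)
    _ = _ := by ring
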